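/- Let F be a field, let S ∈ Mat_{p,q}(F), let a_1,…,a_k ∈ F^p, b_1,…,b_k ∈ F^q and λ_1,…,λ_k ∈ F. Let A be the p×k matrix with columns a_1,…,a_k, let B be the q×k matrix with columns b_1,…,b_k, and let Λ = diag(λ_1,…,λ_k). Let C be the (p+2k)×(q+2k) block matrix ( S , A , 0 ; 0 , I_k , −Λ ; Bᵀ , 0 , I_k ). Then rank C = 2k + rank( S − Σ_{j=1}^k λ_j a_j b_jᵀ ). -/

import Mathlib

/-!
Writing `B` for the matrix with rows `b_jᵀ`, the bottom-right corner `D = (I, -Λ; 0, I)` is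
invertible with `D⁻¹ = (I, Λ; 0, I)`, so block elimination turns `C` into the block diagonal matrix
of `D` and the Schur complement `S - (A, 0) D⁻¹ (0; B) = S - A Λ B`. Over a commutative domain ranks
add over diagonal blocks, by rank-nullity.
-/

open Matrix Module

section FinrankProd

universe u v w

variable {R : Type u} {M : Type v} {N : Type w} [Ring R] [HasRankNullity.{max v w} R]
  [StrongRankCondition R] [AddCommGroup M] [AddCommGroup N] [Module R M] [Module R N]

theorem finrank_prod_of_hasRankNullity [Module.Finite R M] [Module.Finite R N] :
    finrank R (M × N) = finrank R M + finrank R N := by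
  have finrank_ker : finrank R (LinearMap.snd R M N).ker = finrank R M := by
    rw [← LinearMap.range_inl, LinearMap.finrank_range_of_inj LinearMap.inl_injective]
  have finrank_quotient : finrank R ((M × N) ⧸ (LinearMap.snd R M N).ker) = finrank R N :=
    ((LinearMap.snd R M N).quotKerEquivOfSurjective LinearMap.snd_surjective).finrank_eq
  rw [← (LinearMap.snd R M N).ker.finrank_quotient_add_finrank, finrank_quotient, finrank_ker,
    add_comm]

theorem finrank_submodule_prod (P : Submodule R M) (Q : Submodule R N)
    [Module.Finite R P] [Module.Finite R Q] :
    finrank R (P.prod Q) = finrank R P + finrank R Q := by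
  have subtype_injective : Function.Injective (P.subtype.prodMap Q.subtype) :=
    P.subtype_injective.prodMap Q.subtype_injective
  rw [← finrank_prod_of_hasRankNullity, ← LinearMap.finrank_range_of_inj subtype_injective,
    LinearMap.range_prodMap, P.range_subtype, Q.range_subtype]

end FinrankProd

theorem sum_smul_vecMulVec_eq_mul_diagonal_mul {R m n ι : Type*} [CommSemiring R] [Fintype ι]
    [DecidableEq ι] (a : ι → m → R) (b : ι → n → R) (c : ι → R) :
    ∑ j, c j • vecMulVec (a j) (b j) = (of a)ᵀ * diagonal c * of b := by
  ext i j
  rw [mul_apply]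
  simp [Matrix.sum_apply, mul_diagonal, vecMulVec_apply, mul_left_comm, mul_assoc]

section Rank

variable {R l m n o ι κ : Type*} [CommRing R]

theorem mulVecLin_fromBlocks_zero_zero [Fintype m] [Fintype o]
    (X : Matrix l m R) (Y : Matrix n o R) :
    (fromBlocks X 0 0 Y).mulVecLin =
      (LinearEquiv.sumArrowLequivProdArrow l n R R).symm.toLinearMap ∘ₗ
        X.mulVecLin.prodMap Y.mulVecLin ∘ₗ
          (LinearEquiv.sumArrowLequivProdArrow m o R R).toLinearMap := by
  ext v (i | i) <;>
    simp [fromBlocks_mulVec, LinearEquiv.sumArrowLequivProdArrow, Equiv.sumArrowEquivProdArrow,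
      Function.comp_def]

variable [IsDomain R]

theorem rank_fromBlocks_zero_zero [Fintype m] [Fintype o]
    (X : Matrix l m R) (Y : Matrix n o R) :
    (fromBlocks X 0 0 Y).rank = X.rank + Y.rank := by
  rw [Matrix.rank, mulVecLin_fromBlocks_zero_zero, LinearMap.range_comp,
    LinearEquiv.finrank_map_eq, LinearMap.range_comp_of_range_eq_top _ (LinearEquiv.range _),
    LinearMap.range_prodMap, finrank_submodule_prod, Matrix.rank, Matrix.rank]

theorem rank_fromBlocks₂₂ [Fintype m] [Fintype n] [Finite l] [DecidableEq n]
    (A : Matrix l m R) (B : Matrix l n R) (C : Matrix n m R) (D : Matrix n n R) [Invertible D] :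
    (fromBlocks A B C D).rank = Fintype.card n + (A - B * ⅟D * C).rank := by
  classical
  have := Fintype.ofFinite l
  rw [fromBlocks_eq_of_invertible₂₂, rank_mul_eq_left_of_isUnit_det _ _ (by simp),
    rank_mul_eq_right_of_isUnit_det _ _ (by simp), rank_fromBlocks_zero_zero,
    rank_of_isUnit D (isUnit_of_invertible D), add_comm]

theorem rank_blockMatrix_eq_two_mul_add_rank_general
    [Finite m] [Fintype n] [Fintype ι] [Fintype κ] [DecidableEq ι] [DecidableEq κ]
    (S : Matrix m n R) (A : Matrix m ι R) (Λ : Matrix ι κ R) (B : Matrix κ n R) :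
    (fromBlocks S (fromCols A 0) (fromRows 0 B) (fromBlocks 1 (-Λ) 0 1)).rank =
      Fintype.card ι + Fintype.card κ + (S - A * Λ * B).rank := by
  let : Invertible (fromBlocks 1 (-Λ) 0 1 : Matrix (ι ⊕ κ) (ι ⊕ κ) R) :=
    ⟨fromBlocks 1 Λ 0 1, by simp [fromBlocks_multiply], by simp [fromBlocks_multiply]⟩
  have invOf_corner :
      ⅟(fromBlocks 1 (-Λ) 0 1 : Matrix (ι ⊕ κ) (ι ⊕ κ) R) = fromBlocks 1 Λ 0 1 := rfl
  have schur_correction :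
      fromCols A (0 : Matrix m κ R) * (fromBlocks 1 Λ 0 1 : Matrix (ι ⊕ κ) (ι ⊕ κ) R) *
        fromRows (0 : Matrix ι n R) B = A * Λ * B := by
    simp [fromCols_mul_fromBlocks, fromCols_mul_fromRows]
  rw [rank_fromBlocks₂₂, invOf_corner, schur_correction, Fintype.card_sum]

end Rank

/-- Let `S ∈ Mat_{p,q}(F)`, `a_1, …, a_k ∈ F^p`, `b_1, …, b_k ∈ F^q` and
`λ_1, …, λ_k ∈ F`.  Let `A` have columns `a_1, …, a_k`, let `B` have columns `b_1, …, b_k`,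
let `Λ = diag(λ_1, …, λ_k)`, and let `C` be the block matrix
`( S , A , 0 ; 0 , I_k , -Λ ; Bᵀ , 0 , I_k )`.  Then
`rank C = 2k + rank (S - ∑_j λ_j a_j b_jᵀ)`. -/
theorem rank_blockMatrix_eq_two_mul_add_rank
    (F : Type*) [Field F] (p q k : ℕ) (S : Matrix (Fin p) (Fin q) F)
    (a : Fin k → Fin p → F) (b : Fin k → Fin q → F) (lam : Fin k → F) :
    (Matrix.fromBlocks S
        (Matrix.of fun i (j : Fin k ⊕ Fin k) => Sum.elim (fun j' => a j' i) (fun _ => (0 : F)) j)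
        (Matrix.of fun (i : Fin k ⊕ Fin k) j => Sum.elim (fun _ => (0 : F)) (fun i' => b i' j) i)
        (Matrix.fromBlocks 1 (-(Matrix.diagonal lam)) 0 1)).rank
      = 2 * k + (S - ∑ j : Fin k, lam j • Matrix.vecMulVec (a j) (b j)).rank := by
  rw [sum_smul_vecMulVec_eq_mul_diagonal_mul, two_mul]
  convert! rank_blockMatrix_eq_two_mul_add_rank_general S (of a)ᵀ (diagonal lam) (of b) using 3
  · ext (i | i) j <;> rfl
  · simp
  · simp
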